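/- The fractional Riesz potentials related to chirp functions form a semigroup: for α ∈ ℝⁿ with no coordinate in πℤ and β₁, β₂ ∈ (0,n) with β₁ + β₂ ∈ (0,n), one has I_{β₁}^α I_{β₂}^α f = I_{β₁+β₂}^α f for every Schwartz function f (as tempered distributions). -/

import Mathlib

open MeasureTheory Real SchwartzMap Filter
open scoped FourierTransform

noncomputable section

abbrev Rn (n : ℕ) := EuclideanSpace ℝ (Fin n)

/-- The chirp function `e_α(x) = exp(2πi Σₖ (cot αₖ / 2) xₖ²)`. -/
def chirp {n : ℕ} (α : Rn n) (x : Rn n) : ℂ :=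
  Complex.exp (2 * (π : ℂ) * Complex.I *
    ((∑ k, Real.cot (α k) / 2 * (x k) ^ 2 : ℝ) : ℂ))

/-- The constant `c(α) = ∏ₖ √(1 - i cot αₖ)`. -/
def cConst {n : ℕ} (α : Rn n) : ℂ :=
  ∏ k, (1 - Complex.I * (Real.cot (α k) : ℂ)) ^ ((1 : ℂ) / 2)

/-- The FRFT kernel `K_α(x,u)`. -/
def frftKernel {n : ℕ} (α : Rn n) (x u : Rn n) : ℂ :=
  ∏ k, (1 - Complex.I * (Real.cot (α k) : ℂ)) ^ ((1 : ℂ) / 2) *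
    Complex.exp (2 * (π : ℂ) * Complex.I *
      ((Real.cot (α k) / 2 * ((x k) ^ 2 + (u k) ^ 2)
        - x k * u k / Real.sin (α k) : ℝ) : ℂ))

/-- The multidimensional fractional Fourier transform. -/
def frft {n : ℕ} (α : Rn n) (f : Rn n → ℂ) (u : Rn n) : ℂ :=
  ∫ x, f x * frftKernel α x u

/-- `ũ = (u₁ csc α₁, ..., uₙ csc αₙ)`. -/
def tilde {n : ℕ} (α u : Rn n) : Rn n :=
  (EuclideanSpace.equiv (Fin n) ℝ).symm fun k => u k / Real.sin (α k)

/-- `γ(β) = π^{n/2} 2^β Γ(β/2) / Γ((n-β)/2)`. -/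
def gammaC (n : ℕ) (β : ℝ) : ℝ :=
  π ^ ((n : ℝ) / 2) * 2 ^ β * Real.Gamma (β / 2) / Real.Gamma (((n : ℝ) - β) / 2)

/-- The classical Riesz potential `I_β`. -/
def rieszPot (n : ℕ) (β : ℝ) (f : Rn n → ℂ) (x : Rn n) : ℂ :=
  ((1 / gammaC n β : ℝ) : ℂ) * ∫ y, f y / ((‖x - y‖ ^ ((n : ℝ) - β) : ℝ) : ℂ)

/-- The fractional Riesz potential related to chirp functions `I_β^α`. -/
def rieszPotChirp {n : ℕ} (α : Rn n) (β : ℝ) (f : Rn n → ℂ) (x : Rn n) : ℂ :=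
  ((1 / gammaC n β : ℝ) : ℂ) * chirp (-α) x *
    ∫ y, f y * chirp α y / ((‖x - y‖ ^ ((n : ℝ) - β) : ℝ) : ℂ)

/-- `c_n = Γ((n+1)/2)/π^{(n+1)/2}`. -/
def nConst (n : ℕ) : ℝ := Real.Gamma (((n : ℝ) + 1) / 2) / π ^ (((n : ℝ) + 1) / 2)

/-- The j-th fractional Riesz transform related to chirp functions (principal value). -/
def rieszTransChirp {n : ℕ} (α : Rn n) (j : Fin n) (f : Rn n → ℂ) (x : Rn n) : ℂ :=
  ((nConst n : ℝ) : ℂ) * chirp (-α) x *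
    limUnder (nhdsWithin (0 : ℝ) (Set.Ioi 0)) fun ε =>
      ∫ y in {y : Rn n | ε < dist x y},
        (((x j - y j) / ‖x - y‖ ^ ((n : ℝ) + 1) : ℝ) : ℂ) * f y * chirp α y

/-- Partial derivative in the k-th coordinate direction. -/
def partialD {n : ℕ} (k : Fin n) (g : Rn n → ℂ) (y : Rn n) : ℂ :=
  fderiv ℝ g y (EuclideanSpace.single k 1)

/-- `α` has no coordinate in `πℤ`. -/
def notPiZ {n : ℕ} (α : Rn n) : Prop := ∀ k, ∀ m : ℤ, α k ≠ m * π

/-! The Riesz kernel is subordinated to the heat kernel `h_t`: off the origin,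
`‖x‖^(β-n) / γ(β) = Γ(β/2)⁻¹ ∫₀^∞ t^(β/2-1) h_t(x) dt`. Hence the composition law of Riesz kernels
needs no Fourier transform of distributions: it combines `h_s * h_t = h_(s+t)` with the fact that
the kernels `t₊^(a-1) / Γ(a)` on the line add their orders under convolution, which is Euler's Beta
integral. Since the kernels are nonnegative, integrability of `f` against the composite kernel alone
justifies Fubini for the classical potentials. Finally `I_β^α` is `I_β` conjugated by the unimodular
chirp `e_α`, and the inner factors `e_(-α) e_α = 1` cancel in a composite. -/

open Set Module
open scoped ENNReal

section RiemannLiouville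

/-- The Riemann–Liouville kernel `t₊^(a-1) / Γ(a)` on the line. Convolution with it is fractional
integration of order `a`; it takes values in `ℝ≥0∞` so that Tonelli's theorem applies freely. -/
def riemannLiouvilleKernel (a : ℝ) : ℝ → ℝ≥0∞ :=
  (Ioi 0).indicator fun t => ENNReal.ofReal (t ^ (a - 1) / Real.Gamma a)

@[fun_prop]
lemma measurable_riemannLiouvilleKernel (a : ℝ) : Measurable (riemannLiouvilleKernel a) :=
  Measurable.indicator (by fun_prop) measurableSet_Ioi

lemma riemannLiouvilleKernel_of_pos (a : ℝ) {t : ℝ} (ht : 0 < t) :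
    riemannLiouvilleKernel a t = ENNReal.ofReal (t ^ (a - 1) / Real.Gamma a) :=
  indicator_of_mem (mem_Ioi.2 ht) _

lemma riemannLiouvilleKernel_of_nonpos (a : ℝ) {t : ℝ} (ht : t ≤ 0) :
    riemannLiouvilleKernel a t = 0 :=
  indicator_of_notMem (notMem_Ioi.2 ht) _

lemma lintegral_riemannLiouvilleKernel_mul (a : ℝ) (f : ℝ → ℝ≥0∞) :
    ∫⁻ t, riemannLiouvilleKernel a t * f t =
      ∫⁻ t in Ioi 0, ENNReal.ofReal (t ^ (a - 1) / Real.Gamma a) * f t := by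
  simp only [riemannLiouvilleKernel, ← indicator_mul_left]
  exact lintegral_indicator measurableSet_Ioi _

lemma riemannLiouvilleKernel_mul_eq_betaPDF {a b u : ℝ} (ha : 0 < a) (hb : 0 < b) (hu : 0 < u)
    (v : ℝ) :
    riemannLiouvilleKernel a (u * v) * riemannLiouvilleKernel b (u - u * v) =
      ENNReal.ofReal (u ^ (a + b - 2) / Real.Gamma (a + b)) *
        ProbabilityTheory.betaPDF a b v := by
  rw [← mul_one_sub]
  rcases le_or_gt v 0 with hv | hv
  · rw [riemannLiouvilleKernel_of_nonpos a (mul_nonpos_of_nonneg_of_nonpos hu.le hv),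
      ProbabilityTheory.betaPDF_eq_zero_of_nonpos hv, zero_mul, mul_zero]
  rcases le_or_gt 1 v with hv' | hv'
  · rw [riemannLiouvilleKernel_of_nonpos b
      (mul_nonpos_of_nonneg_of_nonpos hu.le (sub_nonpos.2 hv')),
      ProbabilityTheory.betaPDF_eq_zero_of_one_le hv', mul_zero, mul_zero]
  have hw : 0 < 1 - v := sub_pos.2 hv'
  have := Real.Gamma_pos_of_pos ha
  have := Real.Gamma_pos_of_pos hb
  have := Real.Gamma_pos_of_pos (add_pos ha hb)
  rw [riemannLiouvilleKernel_of_pos a (mul_pos hu hv),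
    riemannLiouvilleKernel_of_pos b (mul_pos hu hw),
    ProbabilityTheory.betaPDF_of_pos_lt_one hv hv', ← ENNReal.ofReal_mul (by positivity),
    ← ENNReal.ofReal_mul (by positivity), ProbabilityTheory.beta,
    Real.mul_rpow hu.le hv.le, Real.mul_rpow hu.le hw.le,
    show a + b - 2 = (a - 1) + (b - 1) by ring, Real.rpow_add hu]
  congr 1
  field_simp

lemma lintegral_riemannLiouvilleKernel_mul_sub {a b : ℝ} (ha : 0 < a) (hb : 0 < b) (u : ℝ) :
    ∫⁻ s, riemannLiouvilleKernel a s * riemannLiouvilleKernel b (u - s) =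
      riemannLiouvilleKernel (a + b) u := by
  rcases le_or_gt u 0 with hu | hu
  · have hzero (s : ℝ) : riemannLiouvilleKernel a s * riemannLiouvilleKernel b (u - s) = 0 := by
      rcases le_or_gt s 0 with hs | hs
      · rw [riemannLiouvilleKernel_of_nonpos a hs, zero_mul]
      · rw [riemannLiouvilleKernel_of_nonpos b (by linarith), mul_zero]
    simp only [hzero, lintegral_zero, riemannLiouvilleKernel_of_nonpos _ hu]
  have hpow : u * u ^ (a + b - 2) = u ^ (a + b - 1) := by
    rw [show a + b - 1 = 1 + (a + b - 2) by ring, Real.rpow_add hu, Real.rpow_one]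
  calc ∫⁻ s, riemannLiouvilleKernel a s * riemannLiouvilleKernel b (u - s)
    _ = ENNReal.ofReal u *
          ∫⁻ v, riemannLiouvilleKernel a (u * v) * riemannLiouvilleKernel b (u - u * v) := by
      conv_lhs => rw [← Real.smul_map_volume_mul_left hu.ne']
      rw [lintegral_smul_measure, lintegral_map (by fun_prop) (by fun_prop), abs_of_pos hu,
        smul_eq_mul]
    _ = ENNReal.ofReal u * ENNReal.ofReal (u ^ (a + b - 2) / Real.Gamma (a + b)) := by
      simp only [riemannLiouvilleKernel_mul_eq_betaPDF ha hb hu]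
      rw [lintegral_const_mul' _ _ ENNReal.ofReal_ne_top,
        ProbabilityTheory.lintegral_betaPDF_eq_one ha hb, mul_one]
    _ = riemannLiouvilleKernel (a + b) u := by
      rw [← ENNReal.ofReal_mul hu.le, ← mul_div_assoc, hpow, riemannLiouvilleKernel_of_pos _ hu]

lemma lintegral_lintegral_riemannLiouvilleKernel_mul_comp_add {a b : ℝ} (ha : 0 < a) (hb : 0 < b)
    {r : ℝ → ℝ≥0∞} (hr : Measurable r) :
    ∫⁻ s, ∫⁻ t, riemannLiouvilleKernel a s * riemannLiouvilleKernel b t * r (s + t) =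
      ∫⁻ u, riemannLiouvilleKernel (a + b) u * r u := by
  calc ∫⁻ s, ∫⁻ t, riemannLiouvilleKernel a s * riemannLiouvilleKernel b t * r (s + t)
    _ = ∫⁻ s, ∫⁻ u, riemannLiouvilleKernel a s * riemannLiouvilleKernel b (u - s) * r u := by
      refine lintegral_congr fun s => ?_
      rw [← lintegral_sub_right_eq_self _ s]
      simp only [add_sub_cancel]
    _ = ∫⁻ u, ∫⁻ s, riemannLiouvilleKernel a s * riemannLiouvilleKernel b (u - s) * r u :=
      lintegral_lintegral_swap (by unfold Function.uncurry; fun_prop)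
    _ = ∫⁻ u, riemannLiouvilleKernel (a + b) u * r u := by
      refine lintegral_congr fun u => ?_
      rw [lintegral_mul_const _ (by fun_prop), lintegral_riemannLiouvilleKernel_mul_sub ha hb]

end RiemannLiouville

section Subordination

variable {X : Type*} [MeasurableSpace X]

/-- The kernel of the negative power `(-L)⁻ᵃ = Γ(a)⁻¹ ∫₀^∞ t^(a-1) exp(tL) dt` of the generator `L`
of a semigroup with transition kernels `H t`. -/
def subordinatedKernel (H : ℝ → X → X → ℝ≥0∞) (a : ℝ) (x y : X) : ℝ≥0∞ :=
  ∫⁻ t, riemannLiouvilleKernel a t * H t x y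

lemma lintegral_subordinatedKernel_mul {μ : Measure X} [SFinite μ] {H : ℝ → X → X → ℝ≥0∞}
    (hH : Measurable fun p : ℝ × X × X => H p.1 p.2.1 p.2.2)
    (hsemigroup : ∀ s > 0, ∀ t > 0, ∀ x z, ∫⁻ y, H s x y * H t y z ∂μ = H (s + t) x z)
    {a b : ℝ} (ha : 0 < a) (hb : 0 < b) (x z : X) :
    ∫⁻ y, subordinatedKernel H a x y * subordinatedKernel H b y z ∂μ =
      subordinatedKernel H (a + b) x z := by
  have hHx : Measurable fun p : ℝ × X => H p.1 x p.2 :=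
    hH.comp (measurable_fst.prodMk (measurable_const.prodMk measurable_snd))
  have hHz : Measurable fun p : ℝ × X => H p.1 p.2 z :=
    hH.comp (measurable_fst.prodMk (measurable_snd.prodMk measurable_const))
  have hF : Measurable fun p : (X × ℝ) × ℝ =>
      (riemannLiouvilleKernel a p.1.2 * H p.1.2 x p.1.1) *
        (riemannLiouvilleKernel b p.2 * H p.2 p.1.1 z) := by
    fun_prop
  calc ∫⁻ y, subordinatedKernel H a x y * subordinatedKernel H b y z ∂μ
    _ = ∫⁻ y, (∫⁻ s, ∫⁻ t, (riemannLiouvilleKernel a s * H s x y) *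
          (riemannLiouvilleKernel b t * H t y z)) ∂μ := by
      refine lintegral_congr fun y => (lintegral_lintegral_mul ?_ ?_).symm <;> fun_prop
    _ = ∫⁻ s, ∫⁻ t, (∫⁻ y, (riemannLiouvilleKernel a s * H s x y) *
          (riemannLiouvilleKernel b t * H t y z) ∂μ) := by
      rw [lintegral_lintegral_swap hF.lintegral_prod_right'.aemeasurable]
      exact lintegral_congr fun s => lintegral_lintegral_swap
        (by unfold Function.uncurry; fun_prop)
    _ = ∫⁻ s, ∫⁻ t, riemannLiouvilleKernel a s * riemannLiouvilleKernel b t * H (s + t) x z := by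
      refine lintegral_congr fun s => lintegral_congr fun t => ?_
      rcases le_or_gt s 0 with hs | hs
      · simp only [riemannLiouvilleKernel_of_nonpos a hs, zero_mul, lintegral_zero]
      rcases le_or_gt t 0 with ht | ht
      · simp only [riemannLiouvilleKernel_of_nonpos b ht, zero_mul, mul_zero, lintegral_zero]
      simp only [mul_mul_mul_comm _ (H s x _)]
      rw [lintegral_const_mul _ (by fun_prop), hsemigroup s hs t ht]
    _ = subordinatedKernel H (a + b) x z :=
      lintegral_lintegral_riemannLiouvilleKernel_mul_comp_add ha hb
        (r := fun u => H u x z) (by fun_prop)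

end Subordination

section GammaIntegrals

lemma lintegral_comp_inv_Ioi (f : ℝ → ℝ≥0∞) :
    ∫⁻ t in Ioi 0, ENNReal.ofReal (t ^ 2)⁻¹ * f t⁻¹ = ∫⁻ t in Ioi 0, f t := by
  have himage : (fun t : ℝ => t⁻¹) '' Ioi 0 = Ioi 0 := by
    ext t
    simp
  have hchange := lintegral_image_eq_lintegral_abs_deriv_mul measurableSet_Ioi
    (fun t (ht : t ∈ Ioi 0) => (hasDerivAt_inv (ne_of_gt ht)).hasDerivWithinAt)
    inv_injective.injOn f
  rw [himage] at hchange
  simp only [hchange, abs_neg, abs_inv, abs_sq]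

lemma lintegral_rpow_mul_exp_neg_mul_Ioi {a c : ℝ} (ha : 0 < a) (hc : 0 < c) :
    ∫⁻ t in Ioi 0, ENNReal.ofReal (t ^ (a - 1) * Real.exp (-(c * t))) =
      ENNReal.ofReal (Real.Gamma a / c ^ a) := by
  have := Real.Gamma_pos_of_pos ha
  have hvalue : ∫ t in Ioi 0, t ^ (a - 1) * Real.exp (-(c * t)) = Real.Gamma a / c ^ a := by
    rw [Real.integral_rpow_mul_exp_neg_mul_Ioi ha hc, one_div, Real.inv_rpow hc.le,
      div_eq_inv_mul]
  rw [← hvalue, ofReal_integral_eq_lintegral_ofReal]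
  · exact .of_integral_ne_zero (by rw [hvalue]; positivity)
  · filter_upwards [ae_restrict_mem measurableSet_Ioi] with t (ht : 0 < t)
    positivity

lemma lintegral_rpow_mul_exp_neg_div_Ioi {a c : ℝ} (ha : 0 < a) (hc : 0 < c) :
    ∫⁻ t in Ioi 0, ENNReal.ofReal (t ^ (-a - 1) * Real.exp (-(c / t))) =
      ENNReal.ofReal (Real.Gamma a / c ^ a) := by
  rw [← lintegral_rpow_mul_exp_neg_mul_Ioi ha hc, ← lintegral_comp_inv_Ioi]
  refine setLIntegral_congr_fun measurableSet_Ioi fun t (ht : 0 < t) => ?_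
  have hpow : (t ^ 2)⁻¹ * t⁻¹ ^ (-a - 1) = t ^ (a - 1) := by
    rw [Real.inv_rpow ht.le, ← Real.rpow_neg ht.le, ← Real.rpow_natCast, ← Real.rpow_neg ht.le,
      ← Real.rpow_add ht]
    congr 1
    push_cast
    ring
  simp only [← ENNReal.ofReal_mul (inv_nonneg.2 (sq_nonneg t)), ← mul_assoc, hpow, div_inv_eq_mul]

end GammaIntegrals

section HeatKernel

variable {E : Type*} [NormedAddCommGroup E]

/-- The heat kernel `(4πt)^(-n/2) exp(-‖x‖² / 4t)` of the Laplacian on an `n`-dimensional Euclidean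
space, meaningful for `0 < t`. -/
def heatKernel [Module ℝ E] (t : ℝ) (x : E) : ℝ :=
  (4 * π * t) ^ (-((finrank ℝ E : ℝ) / 2)) * Real.exp (-(‖x‖ ^ 2 / (4 * t)))

lemma heatKernel_nonneg [Module ℝ E] {t : ℝ} (ht : 0 < t) (x : E) : 0 ≤ heatKernel t x := by
  unfold heatKernel
  positivity

@[fun_prop]
lemma measurable_heatKernel [Module ℝ E] [MeasurableSpace E] [OpensMeasurableSpace E] :
    Measurable fun p : ℝ × E => heatKernel p.1 p.2 := by
  unfold heatKernel
  fun_prop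

variable [InnerProductSpace ℝ E]

lemma lintegral_heatKernel [FiniteDimensional ℝ E] [MeasurableSpace E] [BorelSpace E] {t : ℝ}
    (ht : 0 < t) : ∫⁻ x : E, ENNReal.ofReal (heatKernel t x) = 1 := by
  have hvalue : ∫ x : E, heatKernel t x = 1 := by
    have hexp (x : E) : -(‖x‖ ^ 2 / (4 * t)) = -(1 / (4 * t)) * ‖x‖ ^ 2 := by ring
    simp only [heatKernel, hexp]
    rw [integral_const_mul, GaussianFourier.integral_rexp_neg_mul_sq_norm (by positivity),
      show π / (1 / (4 * t)) = 4 * π * t by field_simp, ← Real.rpow_add (by positivity),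
      neg_add_cancel, Real.rpow_zero]
  rw [← ofReal_integral_eq_lintegral_ofReal (.of_integral_ne_zero (by simp [hvalue]))
    (.of_forall (heatKernel_nonneg ht)), hvalue, ENNReal.ofReal_one]

lemma norm_sq_div_add_norm_sq_div {s t : ℝ} (hs : 0 < s) (ht : 0 < t) (v w : E) :
    ‖v‖ ^ 2 / s + ‖w‖ ^ 2 / t =
      ‖v + w‖ ^ 2 / (s + t) + ‖(t / (s + t)) • v - (s / (s + t)) • w‖ ^ 2 / (s * t / (s + t)) := by
  have hst : s + t ≠ 0 := (add_pos hs ht).ne'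
  simp only [norm_add_sq_real, norm_sub_sq_real, norm_smul, inner_smul_left, inner_smul_right,
    mul_pow, Real.norm_eq_abs, sq_abs, conj_trivial]
  field_simp
  ring

lemma heatKernel_mul_heatKernel {s t : ℝ} (hs : 0 < s) (ht : 0 < t) (v w : E) :
    heatKernel s v * heatKernel t w =
      heatKernel (s + t) (v + w) *
        heatKernel (s * t / (s + t)) ((t / (s + t)) • v - (s / (s + t)) • w) := by
  have : 0 < s + t := add_pos hs ht
  have hpow (d : ℝ) : (4 * π * s) ^ d * (4 * π * t) ^ d =
      (4 * π * (s + t)) ^ d * (4 * π * (s * t / (s + t))) ^ d := by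
    rw [← Real.mul_rpow (by positivity) (by positivity),
      ← Real.mul_rpow (by positivity) (by positivity)]
    congr 1
    field_simp
  have hexp : -(‖v‖ ^ 2 / (4 * s)) + -(‖w‖ ^ 2 / (4 * t)) = -(‖v + w‖ ^ 2 / (4 * (s + t))) +
      -(‖(t / (s + t)) • v - (s / (s + t)) • w‖ ^ 2 / (4 * (s * t / (s + t)))) := by
    simp only [mul_comm (4 : ℝ), ← div_div]
    linear_combination (-1 / 4) * norm_sq_div_add_norm_sq_div hs ht v w
  simp only [heatKernel]
  rw [mul_mul_mul_comm, hpow, ← Real.exp_add, hexp, Real.exp_add, mul_mul_mul_comm]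

lemma lintegral_heatKernel_mul_heatKernel [FiniteDimensional ℝ E] [MeasurableSpace E] [BorelSpace E]
    {s t : ℝ} (hs : 0 < s) (ht : 0 < t) (x z : E) :
    ∫⁻ y, ENNReal.ofReal (heatKernel s (x - y)) * ENNReal.ofReal (heatKernel t (y - z)) =
      ENNReal.ofReal (heatKernel (s + t) (x - z)) := by
  have hst : 0 < s + t := add_pos hs ht
  set m : E := (t / (s + t)) • x + (s / (s + t)) • z with hm
  have hfactor (y : E) : heatKernel s (x - y) * heatKernel t (y - z) =
      heatKernel (s + t) (x - z) * heatKernel (s * t / (s + t)) (m - y) := by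
    have hsum : t / (s + t) + s / (s + t) = 1 := by field_simp; ring
    have hcenter : (t / (s + t)) • (x - y) - (s / (s + t)) • (y - z) = m - y := by
      linear_combination (norm := (rw [hm]; module)) -hsum • y
    rw [heatKernel_mul_heatKernel hs ht, sub_add_sub_cancel, hcenter]
  simp only [← ENNReal.ofReal_mul (heatKernel_nonneg hs _), hfactor,
    ENNReal.ofReal_mul (heatKernel_nonneg hst _)]
  rw [lintegral_const_mul _ (by fun_prop),
    lintegral_sub_left_eq_self (fun y => ENNReal.ofReal (heatKernel (s * t / (s + t)) y)) m,
    lintegral_heatKernel (by positivity), mul_one]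

end HeatKernel

section RieszKernel

variable {E : Type*} [NormedAddCommGroup E]

/-- The Riesz kernel `‖x‖^(β-n) / γ(β)` on an `n`-dimensional Euclidean space; convolution with it
is the Riesz potential of order `β`. Its value at `0` is junk. -/
def rieszKernel [Module ℝ E] (β : ℝ) (x : E) : ℝ :=
  (gammaC (finrank ℝ E) β * ‖x‖ ^ ((finrank ℝ E : ℝ) - β))⁻¹

lemma gammaC_pos {n : ℕ} {β : ℝ} (hβ : 0 < β) (hβn : β < n) : 0 < gammaC n β := by
  have : 0 < Real.Gamma (β / 2) := Real.Gamma_pos_of_pos (by linarith)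
  have : 0 < Real.Gamma (((n : ℝ) - β) / 2) := Real.Gamma_pos_of_pos (by linarith)
  unfold gammaC
  positivity

lemma rieszKernel_nonneg [Module ℝ E] {β : ℝ} (hβ : 0 < β) (hβn : β < finrank ℝ E) (x : E) :
    0 ≤ rieszKernel β x := by
  have hγ := gammaC_pos hβ hβn
  unfold rieszKernel
  positivity

lemma rieszKernel_ne_zero [Module ℝ E] {β : ℝ} (hβ : 0 < β) (hβn : β < finrank ℝ E) {x : E}
    (hx : x ≠ 0) : rieszKernel β x ≠ 0 := by
  have hγ := gammaC_pos hβ hβn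
  have := norm_pos_iff.2 hx
  unfold rieszKernel
  positivity

@[fun_prop]
lemma measurable_rieszKernel [Module ℝ E] [MeasurableSpace E] [OpensMeasurableSpace E] (β : ℝ) :
    Measurable (rieszKernel β : E → ℝ) := by
  unfold rieszKernel
  fun_prop

lemma rieszKernel_eq_Gamma_div_rpow [Module ℝ E] {β : ℝ} (hβ : 0 < β) (hβn : β < finrank ℝ E)
    {x : E} (hx : x ≠ 0) :
    rieszKernel β x = (4 * π) ^ (-((finrank ℝ E : ℝ) / 2)) / Real.Gamma (β / 2) *
      (Real.Gamma (((finrank ℝ E : ℝ) - β) / 2) /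
        (‖x‖ ^ 2 / 4) ^ (((finrank ℝ E : ℝ) - β) / 2)) := by
  have hx' := norm_pos_iff.2 hx
  have : 0 < Real.Gamma (β / 2) := Real.Gamma_pos_of_pos (by linarith)
  have hΓn : 0 < Real.Gamma (((finrank ℝ E : ℝ) - β) / 2) := Real.Gamma_pos_of_pos (by linarith)
  have four_rpow (d : ℝ) : (4 : ℝ) ^ (d / 2) = 2 ^ d := by
    rw [show (4 : ℝ) = 2 ^ (2 : ℝ) by norm_num, ← Real.rpow_mul zero_le_two,
      mul_div_cancel₀ d two_ne_zero]
  have sq_rpow (d : ℝ) : (‖x‖ ^ 2) ^ (d / 2) = ‖x‖ ^ d := by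
    rw [← Real.rpow_natCast, ← Real.rpow_mul hx'.le, Nat.cast_ofNat, mul_div_cancel₀ d two_ne_zero]
  rw [Real.rpow_neg (by positivity), Real.mul_rpow (by positivity) (by positivity),
    Real.div_rpow (by positivity) (by positivity), four_rpow, four_rpow, sq_rpow,
    rieszKernel, gammaC, Real.rpow_sub zero_lt_two]
  field_simp

lemma subordinatedKernel_heatKernel [Module ℝ E] {β : ℝ} (hβ : 0 < β)
    (hβn : β < finrank ℝ E) {x y : E} (hxy : x ≠ y) :
    subordinatedKernel (fun t (x y : E) => ENNReal.ofReal (heatKernel t (x - y))) (β / 2) x y =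
      ENNReal.ofReal (rieszKernel β (x - y)) := by
  set n : ℝ := (finrank ℝ E : ℝ) with hn
  have hr : 0 < ‖x - y‖ ^ 2 / 4 := by
    have := norm_pos_iff.2 (sub_ne_zero.2 hxy)
    positivity
  have : 0 < Real.Gamma (β / 2) := Real.Gamma_pos_of_pos (by linarith)
  have hintegrand {t : ℝ} (ht : 0 < t) :
      t ^ (β / 2 - 1) / Real.Gamma (β / 2) * heatKernel t (x - y) =
        (4 * π) ^ (-(n / 2)) / Real.Gamma (β / 2) *
          (t ^ (-((n - β) / 2) - 1) * Real.exp (-(‖x - y‖ ^ 2 / 4 / t))) := by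
    rw [heatKernel, ← hn, Real.mul_rpow (by positivity) ht.le, div_div,
      show -((n - β) / 2) - 1 = β / 2 - 1 + -(n / 2) by ring, Real.rpow_add ht]
    ring
  rw [subordinatedKernel, lintegral_riemannLiouvilleKernel_mul]
  calc ∫⁻ t in Ioi 0, ENNReal.ofReal (t ^ (β / 2 - 1) / Real.Gamma (β / 2)) *
        ENNReal.ofReal (heatKernel t (x - y))
    _ = ∫⁻ t in Ioi 0, ENNReal.ofReal ((4 * π) ^ (-(n / 2)) / Real.Gamma (β / 2)) *
          ENNReal.ofReal (t ^ (-((n - β) / 2) - 1) * Real.exp (-(‖x - y‖ ^ 2 / 4 / t))) := by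
      refine setLIntegral_congr_fun measurableSet_Ioi fun t (ht : 0 < t) => ?_
      rw [← ENNReal.ofReal_mul (by positivity), ← ENNReal.ofReal_mul (by positivity),
        hintegrand ht]
    _ = ENNReal.ofReal (rieszKernel β (x - y)) := by
      rw [lintegral_const_mul' _ _ ENNReal.ofReal_ne_top,
        lintegral_rpow_mul_exp_neg_div_Ioi (by linarith) hr, ← ENNReal.ofReal_mul (by positivity),
        rieszKernel_eq_Gamma_div_rpow hβ hβn (sub_ne_zero.2 hxy)]

variable [InnerProductSpace ℝ E] [FiniteDimensional ℝ E] [MeasurableSpace E] [BorelSpace E]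

lemma lintegral_rieszKernel_mul_rieszKernel {β₁ β₂ : ℝ} (hβ₁ : 0 < β₁) (hβ₂ : 0 < β₂)
    (hβ : β₁ + β₂ < finrank ℝ E) {x z : E} (hxz : x ≠ z) :
    ∫⁻ y, ENNReal.ofReal (rieszKernel β₁ (x - y)) * ENNReal.ofReal (rieszKernel β₂ (y - z)) =
      ENNReal.ofReal (rieszKernel (β₁ + β₂) (x - z)) := by
  have : Nontrivial E := ⟨x, z, hxz⟩
  rw [← subordinatedKernel_heatKernel (add_pos hβ₁ hβ₂) hβ hxz, add_div,
    ← lintegral_subordinatedKernel_mul (μ := volume) (by fun_prop)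
      (fun s hs t ht => lintegral_heatKernel_mul_heatKernel hs ht) (half_pos hβ₁) (half_pos hβ₂)]
  refine lintegral_congr_ae ?_
  filter_upwards [Measure.ae_ne volume x, Measure.ae_ne volume z] with y hyx hyz
  rw [subordinatedKernel_heatKernel hβ₁ (by linarith) hyx.symm,
    subordinatedKernel_heatKernel hβ₂ (by linarith) hyz]

lemma integrable_rieszKernel_mul_rieszKernel {β₁ β₂ : ℝ} (hβ₁ : 0 < β₁) (hβ₂ : 0 < β₂)
    (hβ : β₁ + β₂ < finrank ℝ E) {x z : E} (hxz : x ≠ z) :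
    Integrable fun y => rieszKernel β₁ (x - y) * rieszKernel β₂ (y - z) := by
  refine ⟨Measurable.aestronglyMeasurable (by fun_prop), ?_⟩
  rw [hasFiniteIntegral_iff_ofReal (.of_forall fun y => mul_nonneg
    (rieszKernel_nonneg hβ₁ (by linarith) _) (rieszKernel_nonneg hβ₂ (by linarith) _))]
  simp only [ENNReal.ofReal_mul (rieszKernel_nonneg hβ₁ (by linarith : β₁ < finrank ℝ E) _),
    lintegral_rieszKernel_mul_rieszKernel hβ₁ hβ₂ hβ hxz, ENNReal.ofReal_lt_top]

lemma integral_rieszKernel_mul_rieszKernel {β₁ β₂ : ℝ} (hβ₁ : 0 < β₁) (hβ₂ : 0 < β₂)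
    (hβ : β₁ + β₂ < finrank ℝ E) {x z : E} (hxz : x ≠ z) :
    ∫ y, rieszKernel β₁ (x - y) * rieszKernel β₂ (y - z) = rieszKernel (β₁ + β₂) (x - z) := by
  rw [integral_eq_lintegral_of_nonneg_ae (.of_forall fun y => mul_nonneg
    (rieszKernel_nonneg hβ₁ (by linarith) _) (rieszKernel_nonneg hβ₂ (by linarith) _))
    (Measurable.aestronglyMeasurable (by fun_prop))]
  simp only [ENNReal.ofReal_mul (rieszKernel_nonneg hβ₁ (by linarith : β₁ < finrank ℝ E) _),
    lintegral_rieszKernel_mul_rieszKernel hβ₁ hβ₂ hβ hxz,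
    ENNReal.toReal_ofReal (rieszKernel_nonneg (add_pos hβ₁ hβ₂) hβ _)]

end RieszKernel

section IntegralOperators

variable {F : Type*} [NormedAddCommGroup F] [NormedSpace ℝ F]

lemma integral_smul_integral_smul {Y Z : Type*} [MeasurableSpace Y] [MeasurableSpace Z]
    {μ : Measure Y} {ν : Measure Z} [SFinite μ] [SFinite ν] [CompleteSpace F]
    {k₁ : Y → ℝ} {k₂ : Y → Z → ℝ} {k : Z → ℝ} {g : Z → F}
    (hk₁ : Measurable k₁) (hk₂ : Measurable (Function.uncurry k₂))
    (hk₁_nonneg : ∀ y, 0 ≤ k₁ y) (hk₂_nonneg : ∀ y z, 0 ≤ k₂ y z)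
    (hint : ∀ᵐ z ∂ν, Integrable (fun y => k₁ y * k₂ y z) μ)
    (hcomp : ∀ᵐ z ∂ν, ∫ y, k₁ y * k₂ y z ∂μ = k z)
    (hg : AEStronglyMeasurable g ν) (hkg : Integrable (fun z => k z • g z) ν) :
    ∫ y, k₁ y • ∫ z, k₂ y z • g z ∂ν ∂μ = ∫ z, k z • g z ∂ν := by
  have hnonneg (y : Y) (z : Z) : 0 ≤ k₁ y * k₂ y z := mul_nonneg (hk₁_nonneg y) (hk₂_nonneg y z)
  have hmeas : AEStronglyMeasurable (fun p : Y × Z => (k₁ p.1 * k₂ p.1 p.2) • g p.2)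
      (μ.prod ν) :=
    ((hk₁.comp measurable_fst).mul hk₂).aestronglyMeasurable.smul hg.comp_snd
  have hprod : Integrable (fun p : Y × Z => (k₁ p.1 * k₂ p.1 p.2) • g p.2) (μ.prod ν) := by
    refine (integrable_prod_iff' hmeas).2 ⟨hint.mono fun z hz => hz.smul_const (g z), ?_⟩
    refine hkg.norm.congr ?_
    filter_upwards [hcomp] with z hz
    have hk_nonneg : 0 ≤ k z := hz ▸ integral_nonneg fun y => hnonneg y z
    simp only [norm_smul, Real.norm_of_nonneg (hnonneg _ z), Real.norm_of_nonneg hk_nonneg,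
      integral_mul_const, hz]
  calc ∫ y, k₁ y • ∫ z, k₂ y z • g z ∂ν ∂μ
    _ = ∫ y, (∫ z, (k₁ y * k₂ y z) • g z ∂ν) ∂μ := by simp only [mul_smul, integral_smul]
    _ = ∫ z, (∫ y, (k₁ y * k₂ y z) • g z ∂μ) ∂ν := integral_integral_swap hprod
    _ = ∫ z, k z • g z ∂ν := by
      refine integral_congr_ae ?_
      filter_upwards [hcomp] with z hz
      rw [integral_smul_const, hz]

variable {E : Type*} [NormedAddCommGroup E] [InnerProductSpace ℝ E] [FiniteDimensional ℝ E]
  [MeasurableSpace E] [BorelSpace E]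

lemma integral_rieszKernel_smul_integral_rieszKernel_smul [CompleteSpace F] {β₁ β₂ : ℝ}
    (hβ₁ : 0 < β₁) (hβ₂ : 0 < β₂) (hβ : β₁ + β₂ < finrank ℝ E) {g : E → F} {x : E}
    (hg : Integrable fun z => rieszKernel (β₁ + β₂) (x - z) • g z) :
    ∫ y, rieszKernel β₁ (x - y) • ∫ z, rieszKernel β₂ (y - z) • g z =
      ∫ z, rieszKernel (β₁ + β₂) (x - z) • g z := by
  have : Nontrivial E := nontrivial_of_finrank_pos (R := ℝ)
    (by exact_mod_cast (add_pos hβ₁ hβ₂).trans hβ)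
  have hne : ∀ᵐ z, x ≠ z := (Measure.ae_ne volume x).mono fun _ => Ne.symm
  have hg_meas : AEStronglyMeasurable g := by
    have hinv : Measurable fun z => (rieszKernel (β₁ + β₂) (x - z))⁻¹ := by fun_prop
    refine (hinv.aestronglyMeasurable.smul hg.aestronglyMeasurable).congr ?_
    filter_upwards [hne] with z hz
    exact inv_smul_smul₀ (rieszKernel_ne_zero (add_pos hβ₁ hβ₂) hβ (sub_ne_zero.2 hz)) _
  exact integral_smul_integral_smul (by fun_prop) (by unfold Function.uncurry; fun_prop)
    (fun _ => rieszKernel_nonneg hβ₁ (by linarith) _)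
    (fun _ _ => rieszKernel_nonneg hβ₂ (by linarith) _)
    (hne.mono fun _ => integrable_rieszKernel_mul_rieszKernel hβ₁ hβ₂ hβ)
    (hne.mono fun _ => integral_rieszKernel_mul_rieszKernel hβ₁ hβ₂ hβ) hg_meas hg

end IntegralOperators

lemma integrable_inv_norm_sub_rpow_smul {E F : Type*} [NormedAddCommGroup E] [NormedSpace ℝ E]
    [FiniteDimensional ℝ E] [MeasurableSpace E] [BorelSpace E] {μ : Measure E}
    [μ.IsAddHaarMeasure] [NormedAddCommGroup F] [NormedSpace ℝ F] {p : ℝ} (hp : 0 ≤ p)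
    (hpn : p < finrank ℝ E) {f : E → F} (hf : Integrable f μ) {C : ℝ} (hC : ∀ᵐ y ∂μ, ‖f y‖ ≤ C)
    (x : E) : Integrable (fun y => (‖x - y‖ ^ p)⁻¹ • f y) μ := by
  have hfinrank : 1 ≤ finrank ℝ E := by exact_mod_cast hp.trans_lt hpn
  have hball : IntegrableOn (fun v : E => (‖v‖ ^ p)⁻¹) (Metric.ball 0 1) μ := by
    refine integrableOn_ball_of_norm_le_rpow hfinrank (C := 1) hpn (.of_forall fun v => ?_)
      (Measurable.aestronglyMeasurable (by fun_prop))
    rw [Real.norm_of_nonneg (by positivity), one_mul, Real.rpow_neg (norm_nonneg v)]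
  have hdom := (((hball.integrable_indicator measurableSet_ball).comp_sub_left x).const_mul C).add
    hf.norm
  have hmeas : Measurable fun y : E => (‖x - y‖ ^ p)⁻¹ := by fun_prop
  refine hdom.mono' (hmeas.aestronglyMeasurable.smul hf.aestronglyMeasurable) ?_
  filter_upwards [hC] with y hy
  rw [norm_smul, Real.norm_of_nonneg (by positivity), Pi.add_apply]
  rcases lt_or_ge ‖x - y‖ 1 with hnear | hfar
  · rw [indicator_of_mem (mem_ball_zero_iff.2 hnear), mul_comm]
    exact (mul_le_mul_of_nonneg_right hy (by positivity)).trans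
      (le_add_of_nonneg_right (norm_nonneg _))
  · rw [indicator_of_notMem (by simpa using hfar), mul_zero, zero_add]
    exact mul_le_of_le_one_left (norm_nonneg _)
      (inv_le_one_of_one_le₀ (Real.one_le_rpow hfar hp))

lemma integrable_schwartzMap_div_norm_sub_rpow {n : ℕ} (f : 𝓢(Rn n, ℂ)) {p : ℝ} (hp : 0 ≤ p)
    (hpn : p < n) (x : Rn n) : Integrable fun y => f y / ((‖x - y‖ ^ p : ℝ) : ℂ) := by
  have hbdd (y : Rn n) : ‖f y‖ ≤ ‖f.toBoundedContinuousFunction‖ :=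
    f.toBoundedContinuousFunction.norm_coe_le_norm y
  have hint := integrable_inv_norm_sub_rpow_smul hp (by simpa using hpn)
    (f.integrable (μ := volume)) (.of_forall hbdd) x
  simpa only [Complex.real_smul, Complex.ofReal_inv, inv_mul_eq_div] using hint

section RieszPotential

variable {n : ℕ}

lemma rieszKernel_smul_eq_mul_div (β : ℝ) (x : Rn n) (z : ℂ) :
    rieszKernel β x • z =
      ((1 / gammaC n β : ℝ) : ℂ) * (z / ((‖x‖ ^ ((n : ℝ) - β) : ℝ) : ℂ)) := by
  simp only [rieszKernel, finrank_euclideanSpace_fin, Complex.real_smul]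
  push_cast
  ring

lemma rieszPot_eq_integral_rieszKernel_smul (β : ℝ) (f : Rn n → ℂ) (x : Rn n) :
    rieszPot n β f x = ∫ y, rieszKernel β (x - y) • f y := by
  simp only [rieszPot, rieszKernel_smul_eq_mul_div, integral_const_mul]

lemma rieszPot_rieszPot {β₁ β₂ : ℝ} (hβ₁ : 0 < β₁) (hβ₂ : 0 < β₂) (hβ : β₁ + β₂ < n)
    {f : Rn n → ℂ} {x : Rn n}
    (hf : Integrable fun y => f y / ((‖x - y‖ ^ ((n : ℝ) - (β₁ + β₂)) : ℝ) : ℂ)) :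
    rieszPot n β₁ (rieszPot n β₂ f) x = rieszPot n (β₁ + β₂) f x := by
  have hkernel : Integrable fun y => rieszKernel (β₁ + β₂) (x - y) • f y := by
    simpa only [rieszKernel_smul_eq_mul_div] using hf.const_mul _
  simp only [rieszPot_eq_integral_rieszKernel_smul]
  exact integral_rieszKernel_smul_integral_rieszKernel_smul hβ₁ hβ₂ (by simpa using hβ) hkernel

end RieszPotential

section Chirp

variable {n : ℕ} (α x : Rn n)

lemma chirp_neg_mul_chirp : chirp (-α) x * chirp α x = 1 := by
  have hcot (k : Fin n) : Real.cot ((-α) k) = -Real.cot (α k) := by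
    simp [Real.cot_eq_cos_div_sin, div_neg]
  simp only [chirp, hcot, neg_div, neg_mul, Finset.sum_neg_distrib, Complex.ofReal_neg, mul_neg]
  rw [← Complex.exp_add, neg_add_cancel, Complex.exp_zero]

lemma norm_chirp : ‖chirp α x‖ = 1 := by
  rw [chirp, mul_right_comm, ← Complex.ofReal_ofNat, ← Complex.ofReal_mul, ← Complex.ofReal_mul,
    Complex.norm_exp_ofReal_mul_I]

lemma continuous_chirp : Continuous (chirp α) := by
  unfold chirp
  fun_prop

lemma rieszPotChirp_eq_chirp_neg_mul_rieszPot (β : ℝ) (f : Rn n → ℂ) :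
    rieszPotChirp α β f x = chirp (-α) x * rieszPot n β (fun y => f y * chirp α y) x := by
  rw [rieszPotChirp, rieszPot, mul_left_comm, mul_assoc]

end Chirp

theorem rieszPotChirp_semigroup_general {n : ℕ} (α : Rn n) (_hα : notPiZ α) {β₁ β₂ : ℝ}
    (hβ₁ : 0 < β₁) (hβ₂ : 0 < β₂) (hβ : β₁ + β₂ < n) {f : Rn n → ℂ} {x : Rn n}
    (hf : Integrable fun y => f y / ((‖x - y‖ ^ ((n : ℝ) - (β₁ + β₂)) : ℝ) : ℂ)) :
    rieszPotChirp α β₁ (rieszPotChirp α β₂ f) x = rieszPotChirp α (β₁ + β₂) f x := by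
  have hcancel (y : Rn n) :
      rieszPotChirp α β₂ f y * chirp α y = rieszPot n β₂ (fun z => f z * chirp α z) y := by
    rw [rieszPotChirp_eq_chirp_neg_mul_rieszPot, mul_right_comm, chirp_neg_mul_chirp, one_mul]
  have hmod : Integrable fun y =>
      f y * chirp α y / ((‖x - y‖ ^ ((n : ℝ) - (β₁ + β₂)) : ℝ) : ℂ) := by
    simp only [mul_div_right_comm]
    exact hf.mul_bdd (continuous_chirp α).aestronglyMeasurable
      (.of_forall fun y => (norm_chirp α y).le)
  simp only [rieszPotChirp_eq_chirp_neg_mul_rieszPot α x, hcancel,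
    rieszPot_rieszPot hβ₁ hβ₂ hβ hmod]

/-- semigroup property of fractional Riesz potentials. -/
theorem rieszPotChirp_semigroup {n : ℕ} (α : Rn n) (hα : notPiZ α)
    (β₁ β₂ : ℝ) (hβ₁ : β₁ ∈ Set.Ioo 0 (n : ℝ)) (hβ₂ : β₂ ∈ Set.Ioo 0 (n : ℝ))
    (hβ : β₁ + β₂ ∈ Set.Ioo 0 (n : ℝ)) (f : 𝓢(Rn n, ℂ)) (φ : 𝓢(Rn n, ℂ)) :
    ∫ x, rieszPotChirp α β₁ (rieszPotChirp α β₂ (⇑f)) x * φ x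
      = ∫ x, rieszPotChirp α (β₁ + β₂) (⇑f) x * φ x := by
  have hf (x : Rn n) :=
    integrable_schwartzMap_div_norm_sub_rpow f (sub_nonneg.2 hβ.2.le) (sub_lt_self _ hβ.1) x
  simp only [rieszPotChirp_semigroup_general α hα hβ₁.1 hβ₂.1 hβ.2 (hf _)]
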